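/- Let W₁, W₂ ⊆ C^ω be objectives such that for every cardinal κ, W₁ admits a (κ, W₁)-universal monotone wqo and W₂ admits a (κ, W₂)-universal monotone wqo. Then for every cardinal κ, the intersection W₁ ∩ W₂ admits a (κ, W₁ ∩ W₂)-universal monotone wqo. In particular, the intersection of two objectives with finite ε-memory has locally finite memory, i.e., ε-free memory < ℵ₀. -/

import Mathlib

universe u v

open Cardinal

/-- A `C`-pregraph on vertex type `V`: a set of coloured directed edges. -/
structure Pregraph (C : Type u) (V : Type u) : Type u where
  Edge : V → C → V → Prop

namespace Pregraph

variable {C V V' : Type u}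

/-- A pregraph is a graph when it has no sinks. -/
def NoSinks (G : Pregraph C V) : Prop :=
  ∀ v : V, ∃ c v', G.Edge v c v'

/-- An infinite path with vertex sequence `π` and colour sequence `γ`. -/
def InfPath (G : Pregraph C V) (π : ℕ → V) (γ : ℕ → C) : Prop :=
  ∀ i, G.Edge (π i) (γ i) (π (i + 1))

/-- A finite path starting at a given vertex, recorded as a list of (colour, target) pairs. -/
def ListPath (G : Pregraph C V) : V → List (C × V) → Prop
  | _, [] => True
  | v, e :: p => G.Edge v e.1 e.2 ∧ G.ListPath e.2 p

/-- Endpoint of a finite path. -/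
def pathEnd : V → List (C × V) → V
  | v, [] => v
  | _, e :: p => pathEnd e.2 p

/-- A pretree: every vertex is reached from the root by a unique finite path. -/
def IsPretree (G : Pregraph C V) (t₀ : V) : Prop :=
  ∀ t : V, ∃! p : List (C × V), G.ListPath t₀ p ∧ pathEnd t₀ p = t

/-- A tree: a pretree without sinks. -/
def IsTree (G : Pregraph C V) (t₀ : V) : Prop :=
  G.NoSinks ∧ G.IsPretree t₀

/-- Morphisms of pregraphs. -/
def IsMorphism (G : Pregraph C V) (H : Pregraph C V') (φ : V → V') : Prop :=
  ∀ ⦃v c v'⦄, G.Edge v c v' → H.Edge (φ v) c (φ v')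

/-- The value of a vertex with respect to a valuation: the supremum of the values of
infinite paths from the vertex. -/
noncomputable def valueAt {X : Type v} [CompleteLinearOrder X]
    (G : Pregraph C V) (val : (ℕ → C) → X) (v : V) : X :=
  sSup {x | ∃ π γ, π 0 = v ∧ G.InfPath π γ ∧ val γ = x}

/-- A vertex satisfies an objective `W` if every infinite path from it has colour
sequence in `W`. -/
def VertexSat (G : Pregraph C V) (W : Set (ℕ → C)) (v : V) : Prop :=
  ∀ π γ, π 0 = v → G.InfPath π γ → γ ∈ W

/-- A pregraph satisfies an objective if all its vertices do. -/
def Sat (G : Pregraph C V) (W : Set (ℕ → C)) : Prop :=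
  ∀ v, G.VertexSat W v

/-- Monotonicity of a pregraph with respect to an order relation `le`:
`u ≥ v →c v' ≥ u'` implies `u →c u'`. -/
def MonotoneRel (G : Pregraph C V) (le : V → V → Prop) : Prop :=
  ∀ ⦃u v c v' u'⦄, le v u → G.Edge v c v' → le u' v' → G.Edge u c u'

end Pregraph

/-- The strict relation associated to `le`. -/
def strictOf {V : Type u} (le : V → V → Prop) : V → V → Prop :=
  fun a b => le a b ∧ a ≠ b

/-- `w' : ℕ → C` is a completion of `w : ℕ → Option C` if the projection of `w`
(deleting all `none`'s, i.e. all ε's) is a prefix of (or equal to) `w'`. -/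
def IsCompletion {C : Type u} (w : ℕ → Option C) (w' : ℕ → C) : Prop :=
  ∀ (k n : ℕ) (h : n < ((List.range k).filterMap w).length),
    ((List.range k).filterMap w).get ⟨n, h⟩ = w' n

/-- The ε-extension of a valuation, where `none` plays the role of ε.
If the projection of `w` is infinite, its unique completion `w'` yields `val w'`;
otherwise this is the infimum of `val` over all completions. -/
noncomputable def epsExtension {C : Type u} {X : Type v} [CompleteLinearOrder X]
    (val : (ℕ → C) → X) : (ℕ → Option C) → X :=
  fun w => sInf {x | ∃ w', IsCompletion w w' ∧ val w' = x}

/-- The ε-extension of an objective. -/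
def epsObjective {C : Type u} (W : Set (ℕ → C)) : Set (ℕ → Option C) :=
  {w | ∃ w', IsCompletion w w' ∧ w' ∈ W}

/-- Strategies: `S` is a graph, `πS` a morphism sending `s₀` to `v₀`, and every Adam move
can be simulated from every state above the corresponding vertex. -/
def IsStrategy {C V VS : Type u} (G : Pregraph C V) (VEve : Set V) (v₀ : V)
    (S : Pregraph C VS) (πS : VS → V) (s₀ : VS) : Prop :=
  S.NoSinks ∧ S.IsMorphism G πS ∧ πS s₀ = v₀ ∧
    ∀ v, v ∉ VEve → ∀ c v', G.Edge v c v' →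
      ∀ s, πS s = v → ∃ s', πS s' = v' ∧ S.Edge s c s'

/-- The value of a game: the infimum of the values of its strategies. -/
noncomputable def gameValue {C V : Type u} {X : Type v} [CompleteLinearOrder X]
    (G : Pregraph C V) (VEve : Set V) (v₀ : V) (val : (ℕ → C) → X) : X :=
  sInf {x | ∃ (VS : Type u) (S : Pregraph C VS) (πS : VS → V) (s₀ : VS),
    IsStrategy G VEve v₀ S πS s₀ ∧ S.valueAt val s₀ = x}

/-- An ε-strategy: a product strategy over `M` (vertices form a subset `D ⊆ V × M`,
projection is the first component) whose ε-edges do not update the memory. -/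
def IsEpsStrategy {C V M : Type u} (G : Pregraph (Option C) V) (VEve : Set V) (v₀ : V)
    (D : Set (V × M)) (S : Pregraph (Option C) ↥D) (s₀ : ↥D) : Prop :=
  IsStrategy G VEve v₀ S (fun s => (s : V × M).1) s₀ ∧
    ∀ s s' : ↥D, S.Edge s none s' → (s : V × M).2 = (s' : V × M).2

/-- A product strategy is chromatic if memory updates only depend on the current memory
state and the colour read. -/
def IsChromaticStrat {C V M : Type u} (D : Set (V × M)) (S : Pregraph C ↥D) : Prop :=
  ∃ δ : M → C → M, ∀ (s s' : ↥D) (c : C), S.Edge s c s' → (s' : V × M).2 = δ (s : V × M).2 c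

/-- ε-separated monotone graph over `M` (with `part` the partition into fibres):
`v ≤ v' ↔ v' →ε v` is a partial order making the graph monotone, ε-edges stay inside
fibres, and each fibre is totally ordered. -/
structure IsEpsSeparated {C V M : Type u} (U : Pregraph (Option C) V) (part : V → M) : Prop where
  refl : ∀ v, U.Edge v none v
  antisymm : ∀ ⦃v v'⦄, U.Edge v none v' → U.Edge v' none v → v = v'
  mono : ∀ ⦃u v c v' u'⦄, U.Edge u none v → U.Edge v c v' → U.Edge v' none u' → U.Edge u c u'
  sameFiber : ∀ ⦃v v'⦄, U.Edge v none v' → part v = part v'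
  total : ∀ ⦃v v'⦄, part v = part v' → U.Edge v none v' ∨ U.Edge v' none v

/-- Well-foundedness of the order `v ≤ v' ↔ v' →ε v` of an ε-separated graph. -/
def EpsWellFounded {C V : Type u} (U : Pregraph (Option C) V) : Prop :=
  WellFounded (fun v v' => U.Edge v' none v ∧ v ≠ v')

/-- A chromatic ε-separated graph: colours act uniformly on the parts. -/
def IsChromaticGraph {C V M : Type u} (U : Pregraph (Option C) V) (part : V → M) : Prop :=
  ∃ δ : M → C → M, ∀ ⦃v c v'⦄, U.Edge v (some c) v' → part v' = δ (part v) c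

/-- `(κ, val)`-universality for a valuation: every tree of cardinality `< κ` maps into `U`
by a morphism preserving the value at the root. -/
def IsUniversal {C VU : Type u} {X : Type v} [CompleteLinearOrder X]
    (κ : Cardinal.{u}) (val : (ℕ → C) → X) (U : Pregraph C VU) : Prop :=
  ∀ (VT : Type u) (T : Pregraph C VT) (t₀ : VT), T.IsTree t₀ → #VT < κ →
    ∃ φ : VT → VU, T.IsMorphism U φ ∧ U.valueAt val (φ t₀) ≤ T.valueAt val t₀

/-- A valuation has ε-memory ≤ μ: in every ε-game, the value is attained by an ε-strategy
of memory ≤ μ. -/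
def HasEpsMemLE {C : Type u} {X : Type v} [CompleteLinearOrder X]
    (val : (ℕ → C) → X) (μ : Cardinal.{u}) : Prop :=
  ∀ (V : Type u) (G : Pregraph (Option C) V), G.NoSinks → ∀ (VEve : Set V) (v₀ : V),
    ∃ (M : Type u) (D : Set (V × M)) (S : Pregraph (Option C) ↥D) (s₀ : ↥D),
      #M ≤ μ ∧ IsEpsStrategy G VEve v₀ D S s₀ ∧
      S.valueAt (epsExtension val) s₀ ≤ gameValue G VEve v₀ (epsExtension val)

/-- Eve wins a game with objective `W`: there exists a winning strategy. -/
def EveWins {C V : Type u} (G : Pregraph C V) (VEve : Set V) (v₀ : V)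
    (W : Set (ℕ → C)) : Prop :=
  ∃ (VS : Type u) (S : Pregraph C VS) (πS : VS → V) (s₀ : VS),
    IsStrategy G VEve v₀ S πS s₀ ∧ S.VertexSat W s₀

/-- An objective has ε-memory ≤ μ: in every ε-game that Eve wins, she has a winning
ε-strategy of memory ≤ μ. -/
def ObjEpsMemLE {C : Type u} (W : Set (ℕ → C)) (μ : Cardinal.{u}) : Prop :=
  ∀ (V : Type u) (G : Pregraph (Option C) V), G.NoSinks → ∀ (VEve : Set V) (v₀ : V),
    EveWins G VEve v₀ (epsObjective W) →
    ∃ (M : Type u) (D : Set (V × M)) (S : Pregraph (Option C) ↥D) (s₀ : ↥D),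
      #M ≤ μ ∧ IsEpsStrategy G VEve v₀ D S s₀ ∧ S.VertexSat (epsObjective W) s₀

/-- An objective has ε-memory < μ: in every ε-game that Eve wins, she has a winning
ε-strategy of memory < μ. -/
def ObjEpsMemLT {C : Type u} (W : Set (ℕ → C)) (μ : Cardinal.{u}) : Prop :=
  ∀ (V : Type u) (G : Pregraph (Option C) V), G.NoSinks → ∀ (VEve : Set V) (v₀ : V),
    EveWins G VEve v₀ (epsObjective W) →
    ∃ (M : Type u) (D : Set (V × M)) (S : Pregraph (Option C) ↥D) (s₀ : ↥D),
      #M < μ ∧ IsEpsStrategy G VEve v₀ D S s₀ ∧ S.VertexSat (epsObjective W) s₀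

/-- `(κ, W)`-universality for an objective: every tree of cardinality < κ maps into `U`
by a morphism preserving the value at the root (if the root satisfies `W`, so does its
image). -/
def IsUniversalObj {C VU : Type u} (κ : Cardinal.{u}) (W : Set (ℕ → C))
    (U : Pregraph C VU) : Prop :=
  ∀ (VT : Type u) (T : Pregraph C VT) (t₀ : VT), T.IsTree t₀ → #VT < κ →
    ∃ φ : VT → VU, T.IsMorphism U φ ∧ (T.VertexSat W t₀ → U.VertexSat W (φ t₀))

/-- `W` admits, for every cardinal κ, a `(κ, W)`-universal monotone wqo: a well-monotone
graph all of whose antichains are finite. -/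
def HasWqoUniversal {C : Type u} (W : Set (ℕ → C)) : Prop :=
  ∀ κ : Cardinal.{u},
    ∃ (VU : Type u) (le : VU → VU → Prop) (U : Pregraph C VU),
      IsPartialOrder VU le ∧ WellFounded (strictOf le) ∧ U.MonotoneRel le ∧
      (∀ A : Set VU, IsAntichain le A → A.Finite) ∧
      IsUniversalObj κ W U

/-- An objective has locally finite (ε-free) memory: in every game that Eve wins, she has
a winning strategy all of whose fibres are finite. -/
def LocallyFiniteMemory {C : Type u} (W : Set (ℕ → C)) : Prop :=
  ∀ (V : Type u) (G : Pregraph C V), G.NoSinks → ∀ (VEve : Set V) (v₀ : V),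
    EveWins G VEve v₀ W →
    ∃ (VS : Type u) (S : Pregraph C VS) (πS : VS → V) (s₀ : VS),
      IsStrategy G VEve v₀ S πS s₀ ∧ (∀ v : V, #(↥(πS ⁻¹' {v})) < ℵ₀) ∧
      S.VertexSat W s₀

/-!
For closure under intersection, a tree whose root satisfies `W₁ ∩ W₂` maps into a universal graph
for each objective, hence into their product, and a product of wqos is a wqo (Dickson).

For finite ε-memory, fix a winning strategy `S` for `W₁ ∩ W₂` and play, for each `Wᵢ`, the ε-game
on `S` where Adam may at any time offer a set of vertices containing the current one and Eve
restarts from a member of her choice. Her ε-strategy with finite memory `M` answers a given set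
with a given memory state in a fixed way, and this answer is ε-reachable from every member of the
set: ordered by ε-reachability, the states above vertices of `S` have a least element in each
nonempty subset of each of the finitely many fibres over `M`, hence form a wqo. On them the
ε-saturation of the strategy is monotone, simulates `S` and satisfies `Wᵢ`. In the product of the
two wqos obtained this way, Eve need only remember, at each vertex of the game, a member of a
finite basis of the states which simulate some vertex of `S` above it.
-/

section Order

variable {α : Type*} {r : α → α → Prop}

theorem exists_finite_basis_of_wellQuasiOrdered (h : WellQuasiOrdered r) (s : Set α) :
    ∃ b ⊆ s, b.Finite ∧ ∀ x ∈ s, ∃ y ∈ b, r y x := by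
  by_contra! hno
  have hbad : ∀ t : Set α, t.Finite → ∃ x, x ∈ s ∧ ∀ y ∈ t ∩ s, ¬ r y x := fun t ht =>
    hno (t ∩ s) Set.inter_subset_right (ht.inter_of_left s)
  obtain ⟨f, hf⟩ := Set.seq_of_forall_finite_exists hbad
  obtain ⟨m, n, hmn, hr⟩ := h f
  exact (hf n).2 (f m) ⟨⟨m, hmn, rfl⟩, (hf m).1⟩ hr

theorem partiallyWellOrderedOn_of_exists_least_of_fiber {M : Type*} [Finite M] (part : α → M)
    {s : Set α}
    (h : ∀ m, ∀ A ⊆ s, A.Nonempty → (∀ a ∈ A, part a = m) → ∃ a ∈ A, ∀ b ∈ A, r a b) :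
    s.PartiallyWellOrderedOn r := by
  intro f
  obtain ⟨m, hm⟩ := Finite.exists_infinite_fiber fun n => part (f n)
  have hI := Set.infinite_coe_iff.1 hm
  obtain ⟨_, ⟨i, _, rfl⟩, hleast⟩ := h m ((fun n => (f n : α)) '' ((fun n => part (f n)) ⁻¹' {m}))
    (by rintro _ ⟨i, _, rfl⟩; exact (f i).2) (hI.nonempty.image _)
    (by rintro _ ⟨i, hi, rfl⟩; exact hi)
  obtain ⟨j, hj, hij⟩ := hI.exists_gt i
  exact ⟨i, j, hij, hleast _ ⟨j, hj, rfl⟩⟩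

theorem wellQuasiOrdered_iff_wellFounded_strictOf {V : Type u} {le : V → V → Prop}
    [hle : IsPartialOrder V le] :
    WellQuasiOrdered le ↔
      WellFounded (strictOf le) ∧ ∀ A : Set V, IsAntichain le A → A.Finite := by
  let _ : PartialOrder V :=
    { le := le, le_refl := hle.refl, le_trans := hle.trans, le_antisymm := hle.antisymm }
  have hlt : strictOf le = (· < ·) := by
    funext a b
    exact propext (lt_iff_le_and_ne (a := a) (b := b)).symm
  rw [hlt, ← isWellFounded_iff]
  exact (wellQuasiOrderedLE_def V).symm.trans wellQuasiOrderedLE_iff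

theorem isPreorder_prod {β : Type*} (s : β → β → Prop) [IsPreorder α r] [IsPreorder β s] :
    IsPreorder (α × β) fun a b => r a.1 b.1 ∧ s a.2 b.2 where
  refl a := ⟨refl_of r a.1, refl_of s a.2⟩
  trans _ _ _ hab hbc := ⟨trans_of r hab.1 hbc.1, trans_of s hab.2 hbc.2⟩

theorem isPartialOrder_prod {β : Type*} (s : β → β → Prop) [IsPartialOrder α r]
    [IsPartialOrder β s] : IsPartialOrder (α × β) fun a b => r a.1 b.1 ∧ s a.2 b.2 where
  toIsPreorder := isPreorder_prod s
  antisymm _ _ hab hba := Prod.ext (antisymm_of r hab.1 hba.1) (antisymm_of s hab.2 hba.2)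

end Order

section Sequences

variable {α : Type*}

theorem exists_seq_of_forall_exists {P : ℕ → α → Prop} {r : ℕ → α → α → Prop} {a₀ : α}
    (h₀ : P 0 a₀) (h : ∀ n a, P n a → ∃ b, P (n + 1) b ∧ r n a b) :
    ∃ f : ℕ → α, f 0 = a₀ ∧ ∀ n, P n (f n) ∧ r n (f n) (f (n + 1)) := by
  choose! g hg using h
  let f : ℕ → α := Nat.rec a₀ g
  have hP : ∀ n, P n (f n) := Nat.rec h₀ fun n ih => (hg n _ ih).1
  exact ⟨f, rfl, fun n => ⟨hP n, (hg n _ (hP n)).2⟩⟩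

theorem exists_seq_of_reflTransGen {r : α → α → Prop} {a b : α} (h : Relation.ReflTransGen r a b) :
    ∃ (n : ℕ) (f : ℕ → α), f 0 = a ∧ f n = b ∧ ∀ i < n, r (f i) (f (i + 1)) := by
  induction h using Relation.ReflTransGen.head_induction_on with
  | refl => exact ⟨0, fun _ => b, rfl, rfl, fun _ hi => absurd hi (Nat.not_lt_zero _)⟩
  | @head a _ hac _ ih =>
    obtain ⟨n, f, rfl, hn, hf⟩ := ih
    refine ⟨n + 1, fun | 0 => a | i + 1 => f i, rfl, hn, ?_⟩
    rintro (_ | i) hi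
    · exact hac
    · exact hf i (Nat.lt_of_succ_lt_succ hi)

/-- Enumeration of the positions in a succession of blocks of lengths `k 0 + 1`, `k 1 + 1`, …:
the `n`-th position, counted through all blocks, is given by its block and its offset there. -/
def blockPos (k : ℕ → ℕ) : ℕ → ℕ × ℕ
  | 0 => (0, 0)
  | n + 1 =>
    if (blockPos k n).2 < k (blockPos k n).1 then ((blockPos k n).1, (blockPos k n).2 + 1)
    else ((blockPos k n).1 + 1, 0)

theorem blockPos_snd_le (k : ℕ → ℕ) (n : ℕ) : (blockPos k n).2 ≤ k (blockPos k n).1 := by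
  cases n with
  | zero => exact Nat.zero_le _
  | succ n =>
    rw [blockPos]
    split_ifs with h
    exacts [h, Nat.zero_le _]

theorem exists_blockPos_eq (k : ℕ → ℕ) {i j : ℕ} (hj : j ≤ k i) : ∃ n, blockPos k n = (i, j) := by
  induction i generalizing j with
  | zero =>
    induction j with
    | zero => exact ⟨0, rfl⟩
    | succ j ih =>
      obtain ⟨n, hn⟩ := ih (Nat.le_of_succ_le hj)
      exact ⟨n + 1, by rw [blockPos, hn]; exact if_pos hj⟩
  | succ i ihi =>
    induction j with
    | zero =>
      obtain ⟨n, hn⟩ := ihi le_rfl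
      exact ⟨n + 1, by rw [blockPos, hn, if_neg (lt_irrefl _)]⟩
    | succ j ih =>
      obtain ⟨n, hn⟩ := ih (Nat.le_of_succ_le hj)
      exact ⟨n + 1, by rw [blockPos, hn]; exact if_pos hj⟩

end Sequences

section Completions

variable {C : Type u} {w : ℕ → Option C} {γ : ℕ → C}

/-- The number of letters (non-ε entries) of an ε-word before a given index, i.e. the length of the
projection of that prefix. -/
abbrev letterCount (w : ℕ → Option C) : ℕ → ℕ :=
  Nat.count fun j => (w j).isSome

theorem letterCount_succ_of_eq_some {k : ℕ} {c : C} (h : w k = some c) :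
    letterCount w (k + 1) = letterCount w k + 1 :=
  Nat.count_succ_eq_succ_count_iff.2 (by rw [h, Option.isSome_some])

theorem letterCount_succ_of_eq_none {k : ℕ} (h : w k = none) :
    letterCount w (k + 1) = letterCount w k :=
  Nat.count_succ_eq_count_iff.2 (by rw [h]; exact Bool.false_ne_true)

theorem exists_letter_of_letterCount_eq_succ {k n : ℕ} (h : letterCount w k = n + 1) :
    ∃ j c, letterCount w j = n ∧ w j = some c := by
  induction k with
  | zero => exact absurd h (Nat.succ_ne_zero n).symm
  | succ k ih =>
    cases hk : w k with
    | none => exact ih ((letterCount_succ_of_eq_none hk).symm.trans h)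
    | some c => exact ⟨k, c, Nat.succ.inj ((letterCount_succ_of_eq_some hk).symm.trans h), hk⟩

theorem filterMap_range_succ (w : ℕ → Option C) (k : ℕ) :
    (List.range (k + 1)).filterMap w = (List.range k).filterMap w ++ (w k).toList := by
  rw [List.range_succ, List.filterMap_append]
  cases hk : w k <;> simp [hk]

theorem length_filterMap_range (w : ℕ → Option C) (k : ℕ) :
    ((List.range k).filterMap w).length = letterCount w k := by
  induction k with
  | zero => rfl
  | succ k ih =>
    rw [filterMap_range_succ, List.length_append, ih]
    cases hk : w k with
    | none => exact (letterCount_succ_of_eq_none hk).symm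
    | some c => exact (letterCount_succ_of_eq_some hk).symm

theorem filterMap_range_eq_map (h : ∀ k c, w k = some c → γ (letterCount w k) = c) (k : ℕ) :
    (List.range k).filterMap w = (List.range (letterCount w k)).map γ := by
  induction k with
  | zero => rfl
  | succ k ih =>
    rw [filterMap_range_succ, ih]
    cases hk : w k with
    | none => rw [letterCount_succ_of_eq_none hk, Option.toList_none, List.append_nil]
    | some c =>
      rw [letterCount_succ_of_eq_some hk, List.range_succ, List.map_append, List.map_singleton,
        h k c hk, Option.toList_some]

theorem isCompletion_iff :
    IsCompletion w γ ↔ ∀ k c, w k = some c → γ (letterCount w k) = c := by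
  refine ⟨fun h k c hk => ?_, fun h k n hn => ?_⟩
  · have hlen : letterCount w k < ((List.range (k + 1)).filterMap w).length := by
      rw [length_filterMap_range, letterCount_succ_of_eq_some hk]
      exact Nat.lt_succ_self _
    rw [← h (k + 1) _ hlen, List.get_eq_getElem]
    simp only [filterMap_range_succ, hk, Option.toList_some, ← length_filterMap_range,
      List.getElem_concat_length]
  · simp only [filterMap_range_eq_map h, List.get_eq_getElem, List.getElem_map, List.getElem_range]

end Completions

namespace Pregraph

variable {C V V' : Type u}

section Satisfaction

variable {G : Pregraph C V} {H : Pregraph C V'} {W W' : Set (ℕ → C)}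

theorem VertexSat.mono {v : V} (h : G.VertexSat W v) (hW : W ⊆ W') : G.VertexSat W' v :=
  fun π γ hπ hp => hW (h π γ hπ hp)

theorem VertexSat.of_isMorphism {φ : V → V'} {v : V} (hφ : G.IsMorphism H φ)
    (h : H.VertexSat W (φ v)) : G.VertexSat W v :=
  fun π γ hπ hp => h (φ ∘ π) γ (congrArg φ hπ) fun i => hφ (hp i)

theorem MonotoneRel.vertexSat_of_le {le : V → V → Prop} [Std.Refl le] (hG : G.MonotoneRel le)
    {u v : V} (huv : le u v) (h : G.VertexSat W v) : G.VertexSat W u := by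
  intro π γ hπ hp
  refine h (fun | 0 => v | i + 1 => π (i + 1)) γ rfl ?_
  rintro (_ | i)
  · exact hG (hπ ▸ huv) (hp 0) (refl_of le _)
  · exact hp (i + 1)

end Satisfaction

section Constructions

/-- The subgraph induced on a set of vertices. -/
def restrict (G : Pregraph C V) (P : Set V) : Pregraph C P where
  Edge s c t := G.Edge s c t

/-- The synchronous product of two pregraphs. -/
def prod (G : Pregraph C V) (H : Pregraph C V') : Pregraph C (V × V') where
  Edge p c q := G.Edge p.1 c q.1 ∧ H.Edge p.2 c q.2

variable {G : Pregraph C V} {H : Pregraph C V'}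

theorem isMorphism_prod_fst : (G.prod H).IsMorphism G Prod.fst :=
  fun _ _ _ e => e.1

theorem isMorphism_prod_snd : (G.prod H).IsMorphism H Prod.snd :=
  fun _ _ _ e => e.2

theorem MonotoneRel.prod {le : V → V → Prop} {le' : V' → V' → Prop} (hG : G.MonotoneRel le)
    (hH : H.MonotoneRel le') :
    (G.prod H).MonotoneRel fun a b => le a.1 b.1 ∧ le' a.2 b.2 :=
  fun _ _ _ _ _ h e h' => ⟨hG h.1 e.1 h'.1, hH h.2 e.2 h'.2⟩

theorem VertexSat.prod {W W' : Set (ℕ → C)} {v : V} {v' : V'} (h : G.VertexSat W v)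
    (h' : H.VertexSat W' v') : (G.prod H).VertexSat (W ∩ W') (v, v') :=
  fun π γ hπ hp =>
    ⟨VertexSat.of_isMorphism isMorphism_prod_fst h π γ hπ hp,
      VertexSat.of_isMorphism isMorphism_prod_snd h' π γ hπ hp⟩

theorem isStrategy_restrict_prod {VEve : Set V} {P : Set (V × V')} {v₀ : V} {x₀ : V'}
    (h₀ : (v₀, x₀) ∈ P)
    (hmove : ∀ v x, (v, x) ∈ P → ∃ c v' x', G.Edge v c v' ∧ H.Edge x c x' ∧ (v', x') ∈ P)
    (hadam : ∀ v x, (v, x) ∈ P → v ∉ VEve → ∀ c v', G.Edge v c v' →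
      ∃ x', H.Edge x c x' ∧ (v', x') ∈ P) :
    IsStrategy G VEve v₀ ((G.prod H).restrict P) (fun s => s.1.1) ⟨(v₀, x₀), h₀⟩ := by
  refine ⟨?_, fun _ _ _ e => e.1, rfl, ?_⟩
  · rintro ⟨⟨v, x⟩, hP⟩
    obtain ⟨c, v', x', hG, hH, hP'⟩ := hmove v x hP
    exact ⟨c, ⟨(v', x'), hP'⟩, hG, hH⟩
  · rintro _ hv c v' hG ⟨⟨v, x⟩, hP⟩ rfl
    obtain ⟨x', hH, hP'⟩ := hadam v x hP hv c v' hG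
    exact ⟨⟨(v', x'), hP'⟩, rfl, hG, hH⟩

theorem VertexSat.restrict_prod {W : Set (ℕ → C)} {P : Set (V × V')} {p : P}
    (h : H.VertexSat W p.1.2) : ((G.prod H).restrict P).VertexSat W p :=
  VertexSat.of_isMorphism (φ := fun s : P => s.1.2) (fun _ _ _ e => e.2) h

end Constructions

section Lazy

/-- The ε-graph obtained by adding an ε-loop at every vertex. -/
def lazy (G : Pregraph C V) : Pregraph (Option C) V where
  Edge
    | v, none, v' => v = v'
    | v, some c, v' => G.Edge v c v'

variable {G : Pregraph C V} {s : ℕ → V} {w : ℕ → Option C}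

theorem InfPath.eq_of_letterCount_eq (hp : G.lazy.InfPath s w) {j k : ℕ}
    (hjk : letterCount w j = letterCount w k) : s j = s k := by
  wlog hle : j ≤ k generalizing j k
  · exact (this hjk.symm (le_of_not_ge hle)).symm
  induction k, hle using Nat.le_induction with
  | base => rfl
  | succ k hle ih =>
    have hj : letterCount w j ≤ letterCount w k := Nat.count_monotone _ hle
    have hk := hp k
    cases hw : w k with
    | none =>
      rw [hw] at hk
      exact (ih (hjk.trans (letterCount_succ_of_eq_none hw))).trans hk
    | some c =>
      rw [letterCount_succ_of_eq_some hw] at hjk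
      omega

theorem InfPath.exists_lazy_step (hG : G.NoSinks) (hp : G.lazy.InfPath s w) (n : ℕ) (v : V)
    (hv : ∀ k, letterCount w k = n → s k = v) :
    ∃ v', (∀ k, letterCount w k = n + 1 → s k = v') ∧
      ∃ c, G.Edge v c v' ∧ ∀ k d, w k = some d → letterCount w k = n → c = d := by
  by_cases hn : ∃ k c, letterCount w k = n ∧ w k = some c
  · obtain ⟨k, c, hk, hw⟩ := hn
    have he := hp k
    rw [hw, hv k hk] at he
    refine ⟨s (k + 1), fun j hj => hp.eq_of_letterCount_eq ?_, c, he, fun j d hj hjn => ?_⟩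
    · rw [hj, letterCount_succ_of_eq_some hw, hk]
    · obtain rfl : j = k :=
        Nat.count_injective (Option.isSome_of_eq_some hj) (Option.isSome_of_eq_some hw)
          (hjn.trans hk.symm)
      exact Option.some.inj (hw.symm.trans hj)
  · obtain ⟨c, v', he⟩ := hG v
    exact ⟨v', fun k hk => absurd (exists_letter_of_letterCount_eq_succ hk) hn, c, he,
      fun k d hw hk => absurd ⟨k, d, hk, hw⟩ hn⟩

theorem InfPath.exists_completion (hG : G.NoSinks) (hp : G.lazy.InfPath s w) :
    ∃ π γ, π 0 = s 0 ∧ G.InfPath π γ ∧ IsCompletion w γ := by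
  obtain ⟨π, hπ, h⟩ := exists_seq_of_forall_exists
    (P := fun n v => ∀ k, letterCount w k = n → s k = v)
    (fun _ hk => hp.eq_of_letterCount_eq (k := 0) hk) (hp.exists_lazy_step hG)
  choose _ γ he hγ using h
  exact ⟨π, γ, hπ, he, isCompletion_iff.2 fun k c hk => hγ _ k c hk rfl⟩

theorem VertexSat.lazy {W : Set (ℕ → C)} {v : V} (hG : G.NoSinks) (h : G.VertexSat W v) :
    G.lazy.VertexSat (epsObjective W) v := by
  intro s w hs hp
  obtain ⟨π, γ, hπ, hγ, hw⟩ := hp.exists_completion hG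
  exact ⟨γ, hw, h π γ (hπ.trans hs) hγ⟩

end Lazy

section Saturation

/-- Reachability by a finite sequence of ε-edges. -/
def EpsReach (G : Pregraph (Option C) V) : V → V → Prop :=
  Relation.ReflTransGen fun a b => G.Edge a none b

/-- The `C`-graph whose edges are the coloured edges of an ε-graph, preceded and followed by any
number of ε-edges. -/
def saturate (G : Pregraph (Option C) V) : Pregraph C V where
  Edge v c v' := ∃ a b, G.EpsReach v a ∧ G.Edge a (some c) b ∧ G.EpsReach b v'

variable {G : Pregraph (Option C) V} {W : Set (ℕ → C)}

theorem monotoneRel_saturate : G.saturate.MonotoneRel fun v v' => G.EpsReach v' v :=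
  fun _ _ _ _ _ h ⟨a, b, hva, hab, hbv⟩ h' => ⟨a, b, h.trans hva, hab, hbv.trans h'⟩

theorem letterCount_blockPos (k : ℕ → ℕ) (γ : ℕ → C) (n : ℕ) :
    letterCount (fun n => if (blockPos k n).2 < k (blockPos k n).1 then none
      else some (γ (blockPos k n).1)) n = (blockPos k n).1 := by
  induction n with
  | zero => rfl
  | succ n ih =>
    by_cases h : (blockPos k n).2 < k (blockPos k n).1
    · rw [letterCount_succ_of_eq_none (if_pos h), ih, blockPos, if_pos h]
    · rw [letterCount_succ_of_eq_some (if_neg h), ih, blockPos, if_neg h]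

theorem VertexSat.mem_of_blocks {k : ℕ → ℕ} {p : ℕ → ℕ → V} {γ : ℕ → C}
    (hsat : G.VertexSat (epsObjective W) (p 0 0))
    (heps : ∀ i, ∀ j < k i, G.Edge (p i j) none (p i (j + 1)))
    (hcol : ∀ i, G.Edge (p i (k i)) (some (γ i)) (p (i + 1) 0)) : γ ∈ W := by
  let w : ℕ → Option C := fun n =>
    if (blockPos k n).2 < k (blockPos k n).1 then none else some (γ (blockPos k n).1)
  have hpath : G.InfPath (fun n => p (blockPos k n).1 (blockPos k n).2) w := by
    intro n
    by_cases h : (blockPos k n).2 < k (blockPos k n).1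
    · simpa only [w, blockPos, if_pos h] using heps _ _ h
    · have hlast : (blockPos k n).2 = k (blockPos k n).1 :=
        (blockPos_snd_le k n).antisymm (not_lt.1 h)
      have hstep := hcol (blockPos k n).1
      rw [← hlast] at hstep
      simpa only [w, blockPos, if_neg h] using hstep
  obtain ⟨γ', hγ', hW⟩ := hsat (fun n => p (blockPos k n).1 (blockPos k n).2) w rfl hpath
  suffices γ' = γ by rwa [← this]
  funext i
  obtain ⟨n, hn⟩ := exists_blockPos_eq k (le_refl (k i))
  have hwn : w n = some (γ i) := by simp only [w, hn, lt_irrefl, if_false]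
  have hcount : letterCount w n = i := (letterCount_blockPos k γ n).trans (by rw [hn])
  exact hcount ▸ isCompletion_iff.1 hγ' n (γ i) hwn

theorem VertexSat.saturate {v : V} (h : G.VertexSat (epsObjective W) v) :
    G.saturate.VertexSat W v := by
  rintro π γ rfl hp
  choose a b hπa hab hbπ using hp
  let start : ℕ → V := fun | 0 => π 0 | i + 1 => b i
  have hreach : ∀ i, G.EpsReach (start i) (a i)
    | 0 => hπa 0
    | i + 1 => (hbπ i).trans (hπa (i + 1))
  choose k p hstart hend heps using fun i => exists_seq_of_reflTransGen (hreach i)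
  refine VertexSat.mem_of_blocks (G := G) (p := p) ((hstart 0).symm ▸ h) heps fun i => ?_
  rw [hend, hstart]
  exact hab i

end Saturation

end Pregraph

section ChoiceGame

variable {C V : Type u}

/-- Positions of the choice game on a graph with vertices `V`: a vertex, where Adam moves, or a
nonempty set of vertices, from which Eve is to choose one. -/
inductive ChoicePosition (V : Type u) : Type u
  | vertex (t : V)
  | choice (A : Set V) (hA : A.Nonempty)

namespace ChoicePosition

/-- Eve's positions in the choice game. -/
def eve (V : Type u) : Set (ChoicePosition V) :=
  {q | ∃ A hA, q = choice A hA}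

/-- The vertices at which the play may continue from a position of the choice game. -/
def members : ChoicePosition V → Set V
  | vertex t => {t}
  | choice A _ => A

theorem vertex_notMem_eve (t : V) : vertex t ∉ eve V :=
  fun ⟨_, _, h⟩ => nomatch h

end ChoicePosition

open ChoicePosition

/-- Edges of the choice game on `S`: at a vertex Adam either follows an edge of `S` or offers Eve a
set containing that vertex, and Eve restarts from a member of the offered set. -/
inductive ChoiceEdge (S : Pregraph C V) : ChoicePosition V → Option C → ChoicePosition V → Prop
  | move {t c t'} : S.Edge t c t' → ChoiceEdge S (vertex t) (some c) (vertex t')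
  | offer {t A} (hA : A.Nonempty) : t ∈ A → ChoiceEdge S (vertex t) none (choice A hA)
  | answer {t A} (hA : A.Nonempty) : t ∈ A → ChoiceEdge S (choice A hA) none (vertex t)

/-- The choice game on `S`. -/
def choiceGame (S : Pregraph C V) : Pregraph (Option C) (ChoicePosition V) where
  Edge := ChoiceEdge S

variable {S : Pregraph C V} {s₀ : V}

theorem noSinks_choiceGame (hS : S.NoSinks) : (choiceGame S).NoSinks
  | vertex t =>
    have ⟨c, t', h⟩ := hS t
    ⟨some c, vertex t', .move h⟩
  | choice _ hA =>
    have ⟨t, ht⟩ := hA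
    ⟨none, vertex t, .answer hA ht⟩

-- Eve always answers an offered set with the vertex it was offered from.
theorem eveWins_choiceGame {W : Set (ℕ → C)} (hS : S.NoSinks) (hsat : S.VertexSat W s₀) :
    EveWins (choiceGame S) (eve V) (vertex s₀) (epsObjective W) := by
  let P : Set (ChoicePosition V × V) := {p | p.2 ∈ p.1.members}
  have h₀ : (vertex s₀, s₀) ∈ P := rfl
  refine ⟨P, ((choiceGame S).prod S.lazy).restrict P, _, ⟨_, h₀⟩,
    Pregraph.isStrategy_restrict_prod h₀ ?_ ?_, (hsat.lazy hS).restrict_prod⟩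
  · rintro (t | ⟨A, hA⟩) x hx
    · obtain rfl : x = t := hx
      obtain ⟨c, t', h⟩ := hS x
      exact ⟨some c, vertex t', t', .move h, h, rfl⟩
    · exact ⟨none, vertex x, x, .answer hA hx, rfl, rfl⟩
  · rintro (t | ⟨A, hA⟩) x hx hv c v' h
    · obtain rfl : x = t := hx
      cases h with
      | move h => exact ⟨_, h, rfl⟩
      | offer _ hA => exact ⟨x, rfl, hA⟩
    · exact absurd ⟨A, hA, rfl⟩ hv

/-- The states of a product strategy in the choice game which lie above a vertex. -/
def vertexStates {M : Type u} (D : Set (ChoicePosition V × M)) : Set D :=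
  {d | ∃ t, d.1.1 = vertex t}

variable {M : Type u} {D : Set (ChoicePosition V × M)} {Q : Pregraph (Option C) D} {q₀ : D}

namespace IsEpsStrategy

theorem exists_offer (hQ : IsEpsStrategy (choiceGame S) (eve V) (vertex s₀) D Q q₀) {d : D} {t : V}
    {A : Set V} (hA : A.Nonempty) (hd : d.1.1 = vertex t) (ht : t ∈ A) :
    ∃ e : D, e.1 = (choice A hA, d.1.2) ∧ Q.Edge d none e := by
  obtain ⟨e, he, hde⟩ := hQ.1.2.2.2 (vertex t) (vertex_notMem_eve t) none _ (.offer hA ht) d hd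
  exact ⟨e, Prod.ext he (hQ.2 d e hde).symm, hde⟩

theorem exists_answer (hQ : IsEpsStrategy (choiceGame S) (eve V) (vertex s₀) D Q q₀) {e : D} {m : M}
    {A : Set V} {hA : A.Nonempty} (he : e.1 = (choice A hA, m)) :
    ∃ t ∈ A, ∃ d : D, d.1 = (vertex t, m) ∧ Q.Edge e none d := by
  obtain ⟨c, d, hed⟩ := hQ.1.1 e
  have hmove : ChoiceEdge S e.1.1 c d.1.1 := hQ.1.2.1 hed
  rw [he] at hmove
  generalize hd : d.1.1 = q at hmove
  cases hmove with
  | @answer t _ _ ht =>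
    have hm : e.1.2 = m := congrArg Prod.snd he
    exact ⟨t, ht, d, Prod.ext hd ((hQ.2 e d hed).symm.trans hm), hed⟩

theorem exists_epsReach_least (hQ : IsEpsStrategy (choiceGame S) (eve V) (vertex s₀) D Q q₀) (m : M)
    (A : Set D) (hAv : A ⊆ vertexStates D) (hA : A.Nonempty) (hAm : ∀ d ∈ A, d.1.2 = m) :
    ∃ a ∈ A, ∀ d ∈ A, Q.EpsReach d a := by
  let T : Set V := {t | ∃ d ∈ A, d.1.1 = vertex t}
  have hT : T.Nonempty :=
    have ⟨d, hd⟩ := hA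
    have ⟨t, ht⟩ := hAv hd
    ⟨t, d, hd, ht⟩
  have hoffer : ∀ d ∈ A, ∃ e : D, e.1 = (choice T hT, m) ∧ Q.Edge d none e := by
    intro d hd
    obtain ⟨t, ht⟩ := hAv hd
    exact hAm d hd ▸ hQ.exists_offer hT ht ⟨d, hd, ht⟩
  obtain ⟨d₀, hd₀⟩ := hA
  obtain ⟨e, he, -⟩ := hoffer d₀ hd₀
  obtain ⟨t, ⟨a, ha, hat⟩, a', ha', hea⟩ := hQ.exists_answer he
  obtain rfl : a = a' := Subtype.ext ((Prod.ext hat (hAm a ha)).trans ha'.symm)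
  refine ⟨a, ha, fun d hd => ?_⟩
  obtain ⟨e', he', hde⟩ := hoffer d hd
  obtain rfl : e' = e := Subtype.ext (he'.trans he.symm)
  exact (Relation.ReflTransGen.single hde).tail hea

theorem partiallyWellOrderedOn_vertexStates [Finite M]
    (hQ : IsEpsStrategy (choiceGame S) (eve V) (vertex s₀) D Q q₀) :
    (vertexStates D).PartiallyWellOrderedOn fun a b => Q.EpsReach b a :=
  partiallyWellOrderedOn_of_exists_least_of_fiber (fun d => d.1.2) hQ.exists_epsReach_least

end IsEpsStrategy

end ChoiceGame

/-- A monotone well-quasi-ordered graph which simulates the graph `S` from the vertex `s₀`, started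
in a state that satisfies `W`. -/
structure WqoSimulation {C V : Type u} (S : Pregraph C V) (s₀ : V) (W : Set (ℕ → C)) where
  State : Type u
  le : State → State → Prop
  isPreorder : IsPreorder State le
  wellQuasiOrdered : WellQuasiOrdered le
  graph : Pregraph C State
  monotoneRel : graph.MonotoneRel le
  Rel : V → State → Prop
  exists_edge : ∀ ⦃s u c s'⦄, Rel s u → S.Edge s c s' → ∃ u', Rel s' u' ∧ graph.Edge u c u'
  start : State
  rel_start : Rel s₀ start
  vertexSat_start : graph.VertexSat W start

namespace WqoSimulation

variable {C V VS : Type u} {S : Pregraph C VS} {s₀ : VS} {W W₁ W₂ : Set (ℕ → C)}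

/-- The product of two simulations, for the intersection of their objectives. -/
def prod (X₁ : WqoSimulation S s₀ W₁) (X₂ : WqoSimulation S s₀ W₂) :
    WqoSimulation S s₀ (W₁ ∩ W₂) where
  State := X₁.State × X₂.State
  le a b := X₁.le a.1 b.1 ∧ X₂.le a.2 b.2
  isPreorder := have := X₁.isPreorder; have := X₂.isPreorder; isPreorder_prod X₂.le
  wellQuasiOrdered := have := X₁.isPreorder; X₁.wellQuasiOrdered.prod X₂.wellQuasiOrdered
  graph := X₁.graph.prod X₂.graph
  monotoneRel := X₁.monotoneRel.prod X₂.monotoneRel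
  Rel s u := X₁.Rel s u.1 ∧ X₂.Rel s u.2
  exists_edge _ _ _ _ hR hE :=
    have ⟨u₁, hu₁, hE₁⟩ := X₁.exists_edge hR.1 hE
    have ⟨u₂, hu₂, hE₂⟩ := X₂.exists_edge hR.2 hE
    ⟨(u₁, u₂), ⟨hu₁, hu₂⟩, hE₁, hE₂⟩
  start := (X₁.start, X₂.start)
  rel_start := ⟨X₁.rel_start, X₂.rel_start⟩
  vertexSat_start := X₁.vertexSat_start.prod X₂.vertexSat_start

/-- The simulation of `S` by the ε-saturation of an ε-strategy with finite memory in the choice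
game on `S`, ordered by ε-reachability. -/
def ofEpsStrategy {M : Type u} [Finite M] {D : Set (ChoicePosition VS × M)}
    {Q : Pregraph (Option C) D} {q₀ : D}
    (hQ : IsEpsStrategy (choiceGame S) (ChoicePosition.eve VS) (.vertex s₀) D Q q₀)
    (hsat : Q.VertexSat (epsObjective W) q₀) : WqoSimulation S s₀ W where
  State := vertexStates D
  le a b := Q.EpsReach b a
  isPreorder := { refl := fun _ => .refl, trans := fun _ _ _ hab hbc => hbc.trans hab }
  wellQuasiOrdered := hQ.partiallyWellOrderedOn_vertexStates
  graph := Q.saturate.restrict (vertexStates D)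
  monotoneRel _ _ _ _ _ h e h' := Pregraph.monotoneRel_saturate h e h'
  Rel s d := d.1.1.1 = .vertex s
  exists_edge s d c s' hd hE :=
    have ⟨d', hd', hE'⟩ := hQ.1.2.2.2 (.vertex s) (ChoicePosition.vertex_notMem_eve s) (some c)
      (.vertex s') (.move hE) d hd
    ⟨⟨d', s', hd'⟩, hd', d, d', .refl, hE', .refl⟩
  start := ⟨q₀, s₀, hQ.1.2.2.1⟩
  rel_start := hQ.1.2.2.1
  vertexSat_start :=
    Pregraph.VertexSat.of_isMorphism (φ := Subtype.val) (fun _ _ _ e => e) hsat.saturate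

theorem exists_locallyFinite_strategy (X : WqoSimulation S s₀ W) {G : Pregraph C V}
    {VEve : Set V} {v₀ : V} {πS : VS → V} (hS : IsStrategy G VEve v₀ S πS s₀) :
    ∃ (VS' : Type u) (S' : Pregraph C VS') (π : VS' → V) (s : VS'),
      IsStrategy G VEve v₀ S' π s ∧ (∀ v, #(↥(π ⁻¹' {v})) < ℵ₀) ∧ S'.VertexSat W s := by
  have := X.isPreorder
  obtain ⟨hns, hmor, hinit, hadam⟩ := hS
  choose B hBsub hBfin hB using fun v =>
    exists_finite_basis_of_wellQuasiOrdered X.wellQuasiOrdered {u | ∃ s, πS s = v ∧ X.Rel s u}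
  have hmove : ∀ s u c s', X.Rel s u → S.Edge s c s' → ∃ b ∈ B (πS s'), X.graph.Edge u c b := by
    intro s u c s' hR hE
    obtain ⟨u', hR', hU⟩ := X.exists_edge hR hE
    obtain ⟨b, hb, hle⟩ := hB (πS s') u' ⟨s', rfl, hR'⟩
    exact ⟨b, hb, X.monotoneRel (refl_of X.le u) hU hle⟩
  obtain ⟨b₀, hb₀, hle₀⟩ := hB v₀ X.start ⟨s₀, hinit, X.rel_start⟩
  refine ⟨_, (G.prod X.graph).restrict {p | p.2 ∈ B p.1}, _, ⟨(v₀, b₀), hb₀⟩,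
    Pregraph.isStrategy_restrict_prod hb₀ ?_ ?_, fun v => ?_,
    (X.monotoneRel.vertexSat_of_le hle₀ X.vertexSat_start).restrict_prod⟩
  · intro v u hu
    obtain ⟨s, rfl, hR⟩ := hBsub v hu
    obtain ⟨c, s', hE⟩ := hns s
    obtain ⟨b, hb, hU⟩ := hmove s u c s' hR hE
    exact ⟨c, πS s', b, hmor hE, hU, hb⟩
  · intro v u hu hv c v' hE
    obtain ⟨s, hs, hR⟩ := hBsub v hu
    obtain ⟨s', rfl, hE'⟩ := hadam v hv c v' hE s hs
    obtain ⟨b, hb, hU⟩ := hmove s u c s' hR hE'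
    exact ⟨b, hU, hb⟩
  · refine Cardinal.lt_aleph0_iff_set_finite.2 (Set.Finite.of_injOn (f := fun s => s.1.2)
      (fun s hs => ?_) (fun s hs s' hs' h => ?_) (hBfin v))
    · exact (show s.1.1 = v from hs) ▸ s.2
    · exact Subtype.ext (Prod.ext (hs.trans hs'.symm) h)

end WqoSimulation

section Memory

variable {C : Type u} {W W₁ W₂ : Set (ℕ → C)}

theorem ObjEpsMemLE.objEpsMemLT {μ ν : Cardinal.{u}} (h : ObjEpsMemLE W μ) (hμν : μ < ν) :
    ObjEpsMemLT W ν := fun V G hG VEve v₀ hwin =>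
  have ⟨M, D, S, s₀, hM, hS⟩ := h V G hG VEve v₀ hwin
  ⟨M, D, S, s₀, hM.trans_lt hμν, hS⟩

theorem ObjEpsMemLT.nonempty_wqoSimulation {VS : Type u} {S : Pregraph C VS} {s₀ : VS}
    (h : ObjEpsMemLT W ℵ₀) (hS : S.NoSinks) (hsat : S.VertexSat W s₀) :
    Nonempty (WqoSimulation S s₀ W) := by
  obtain ⟨M, D, Q, q₀, hM, hQ, hQsat⟩ :=
    h _ (choiceGame S) (noSinks_choiceGame hS) _ _ (eveWins_choiceGame hS hsat)
  have : Finite M := Cardinal.lt_aleph0_iff_finite.1 hM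
  exact ⟨.ofEpsStrategy hQ hQsat⟩

theorem ObjEpsMemLT.locallyFiniteMemory_inter (h₁ : ObjEpsMemLT W₁ ℵ₀)
    (h₂ : ObjEpsMemLT W₂ ℵ₀) : LocallyFiniteMemory (W₁ ∩ W₂) := by
  rintro V G - VEve v₀ ⟨VS, S, πS, s₀, hS, hsat⟩
  obtain ⟨X₁⟩ := h₁.nonempty_wqoSimulation hS.1 (hsat.mono Set.inter_subset_left)
  obtain ⟨X₂⟩ := h₂.nonempty_wqoSimulation hS.1 (hsat.mono Set.inter_subset_right)
  exact (X₁.prod X₂).exists_locallyFinite_strategy hS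

end Memory

section Universality

variable {C : Type u} {W₁ W₂ : Set (ℕ → C)} {κ : Cardinal.{u}}

theorem IsUniversalObj.prod {V₁ V₂ : Type u} {U₁ : Pregraph C V₁} {U₂ : Pregraph C V₂}
    (h₁ : IsUniversalObj κ W₁ U₁) (h₂ : IsUniversalObj κ W₂ U₂) :
    IsUniversalObj κ (W₁ ∩ W₂) (U₁.prod U₂) := fun VT T t₀ hT hκ =>
  have ⟨φ₁, hφ₁, hsat₁⟩ := h₁ VT T t₀ hT hκ
  have ⟨φ₂, hφ₂, hsat₂⟩ := h₂ VT T t₀ hT hκ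
  ⟨fun t => (φ₁ t, φ₂ t), fun _ _ _ e => ⟨hφ₁ e, hφ₂ e⟩, fun h =>
    (hsat₁ (h.mono Set.inter_subset_left)).prod (hsat₂ (h.mono Set.inter_subset_right))⟩

/-- `W` admits a `(κ, W)`-universal monotone wqo, for a given cardinal `κ`; `HasWqoUniversal W` is
this for all `κ`. -/
def HasWqoUniversalAt (κ : Cardinal.{u}) (W : Set (ℕ → C)) : Prop :=
  ∃ (VU : Type u) (le : VU → VU → Prop) (U : Pregraph C VU),
    IsPartialOrder VU le ∧ WellFounded (strictOf le) ∧ U.MonotoneRel le ∧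
    (∀ A : Set VU, IsAntichain le A → A.Finite) ∧ IsUniversalObj κ W U

theorem HasWqoUniversalAt.inter (h₁ : HasWqoUniversalAt κ W₁) (h₂ : HasWqoUniversalAt κ W₂) :
    HasWqoUniversalAt κ (W₁ ∩ W₂) := by
  obtain ⟨V₁, le₁, U₁, hpo₁, hwf₁, hmono₁, hfin₁, huniv₁⟩ := h₁
  obtain ⟨V₂, le₂, U₂, hpo₂, hwf₂, hmono₂, hfin₂, huniv₂⟩ := h₂
  have hpo := isPartialOrder_prod (r := le₁) le₂
  have hwqo := (wellQuasiOrdered_iff_wellFounded_strictOf.2 ⟨hwf₁, hfin₁⟩).prod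
    (wellQuasiOrdered_iff_wellFounded_strictOf.2 ⟨hwf₂, hfin₂⟩)
  obtain ⟨hwf, hfin⟩ := wellQuasiOrdered_iff_wellFounded_strictOf.1 hwqo
  exact ⟨V₁ × V₂, _, U₁.prod U₂, hpo, hwf, hmono₁.prod hmono₂, hfin, huniv₁.prod huniv₂⟩

end Universality

theorem wqo_universal_intersection_general {C : Type u} (W₁ W₂ : Set (ℕ → C)) :
    (∀ κ : Cardinal.{u}, HasWqoUniversalAt κ W₁ → HasWqoUniversalAt κ W₂ →
      HasWqoUniversalAt κ (W₁ ∩ W₂)) ∧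
    (ObjEpsMemLT W₁ ℵ₀ → ObjEpsMemLT W₂ ℵ₀ → LocallyFiniteMemory (W₁ ∩ W₂)) :=
  ⟨fun _ => HasWqoUniversalAt.inter, ObjEpsMemLT.locallyFiniteMemory_inter⟩

/-- Objectives admitting universal monotone wqo's are closed under
intersection; in particular the intersection of two objectives with finite ε-memory has
locally finite memory. -/
theorem wqo_universal_intersection
    {C : Type u} (W₁ W₂ : Set (ℕ → C)) :
    (HasWqoUniversal W₁ → HasWqoUniversal W₂ → HasWqoUniversal (W₁ ∩ W₂)) ∧
    ((∃ n₁ : ℕ, ObjEpsMemLE W₁ (n₁ : Cardinal.{u})) →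
     (∃ n₂ : ℕ, ObjEpsMemLE W₂ (n₂ : Cardinal.{u})) →
     LocallyFiniteMemory (W₁ ∩ W₂)) :=
  have ⟨huniv, hmem⟩ := wqo_universal_intersection_general W₁ W₂
  ⟨fun h₁ h₂ κ => huniv κ (h₁ κ) (h₂ κ), fun ⟨_, h₁⟩ ⟨_, h₂⟩ =>
    hmem (h₁.objEpsMemLT natCast_lt_aleph0) (h₂.objEpsMemLT natCast_lt_aleph0)⟩
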